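/- Let u₁,...,u_{N−1} : Ω → ℝ^d be bounded vector fields, let S : Ω̄ → Ω̄ be a μ-measure-preserving map with S^N = Id μ-a.e., let μ be a Borel probability measure on Ω absolutely continuous with respect to Lebesgue measure, and let H : ℝ^d × (ℝ^d)^{N−1} → ℝ be a Lipschitz function such that: (i) H(·, Y) is concave for every Y ∈ (ℝ^d)^{N−1} and H(x, ·) is convex for every x ∈ ℝ^d; (ii) H is N-sub-antisymmetric on Ω̄^N, i.e. Σ_{i=0}^{N−1} H(σ^i(x₁,...,x_N)) ≤ 0 on Ω̄^N and H(x,...,x) = 0; (iii) ∫_Ω H(x, Sx, ..., S^{N−1}x) dμ(x) = 0; and (iv) (u₁(x),...,u_{N−1}(x)) ∈ ∂_{2,...,N} H(x, Sx, ..., S^{N−1}x) for μ-a.e. x ∈ Ω. If either S ∈ W^{1,1}_loc(Ω) or u_i ∈ W^{1,1}_loc(Ω) for all i = 1,...,N−1, then there exists a set Ω₀ ⊂ Ω of full μ-measure such that for every x ∈ Ω₀ the partial gradients ∇_i H(x, Sx, ..., S^{N−1}x) exist for all i = 1,...,N. -/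

import Mathlib

/- STATEMENT 19: Theorem 7.1 (Appendix: a.e. existence of all partial gradients of the
Hamiltonian along the orbit of the involution).  Paper's `N` is formalized as `N + 1`,
so the `N−1` vector fields are `u : Fin N → …` (and `N ≥ 2` becomes `1 ≤ N`).
Membership in `W^{1,1}_loc(Ω)` is encoded through the existence of a locally integrable
weak derivative. -/

open MeasureTheory Filter Set Function
open scoped RealInnerProductSpace Topology ENNReal

noncomputable section

abbrev Euc (d : ℕ) : Type := EuclideanSpace ℝ (Fin d)

/-- The cyclic shift `σ(x₁,…,x_N) = (x₂,…,x_N,x₁)`. -/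
def cyc {n : ℕ} {α : Type*} (x : Fin n → α) : Fin n → α :=
  fun i => x ⟨(i.1 + 1) % n, Nat.mod_lt _ i.pos⟩

/-- `H` is `N`-sub-antisymmetric on `A`. -/
def SubAnti {d N : ℕ} (A : Set (Euc d)) (H : (Fin (N + 1) → Euc d) → ℝ) : Prop :=
  (∀ x : Fin (N + 1) → Euc d, (∀ i, x i ∈ A) →
    ∑ i : Fin (N + 1), H (cyc^[i.1] x) ≤ 0) ∧
  ∀ z ∈ A, H (fun _ => z) = 0

/-- `H(·, y)` is concave for every fixed tail `y`. -/
def ConcaveFirst {d N : ℕ} (H : (Fin (N + 1) → Euc d) → ℝ) : Prop :=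
  ∀ y : Fin N → Euc d, ConcaveOn ℝ univ fun z : Euc d => H (Fin.cons z y)

/-- `H(x, ·)` is jointly convex in the last `N−1` variables for every fixed `x`. -/
def ConvexTail {d N : ℕ} (H : (Fin (N + 1) → Euc d) → ℝ) : Prop :=
  ∀ z : Euc d, ConvexOn ℝ univ fun y : Fin N → Euc d => H (Fin.cons z y)

/-- `u ∈ W^{1,1}_loc(Ω; ℝ^d)`: locally integrable with a locally integrable weak
derivative on `Ω`. -/
def MemW11loc {d : ℕ} (Ω : Set (Euc d)) (u : Euc d → Euc d) : Prop :=
  LocallyIntegrableOn u Ω volume ∧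
  ∃ Du : Euc d → (Euc d →L[ℝ] Euc d),
    AEStronglyMeasurable Du (volume.restrict Ω) ∧
    LocallyIntegrableOn (fun x => ‖Du x‖) Ω volume ∧
    ∀ φ : Euc d → ℝ, ContDiff ℝ (⊤ : ℕ∞) φ → HasCompactSupport φ → tsupport φ ⊆ Ω →
      ∀ v : Euc d, ∫ x in Ω, fderiv ℝ φ x v • u x = - ∫ x in Ω, φ x • Du x v

/-!
Write `Y x = (Sx, …, S^{N-1}x)` and `p x = (u₁ x, …, u_{N-1} x)`. The functions
`z ↦ H (z, Y z) + ⟨p x, Y x - Y z⟩` and `z ↦ H (z, Y z) + ⟨p z, Y x - Y z⟩` equal `H (x, Y x)` at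
`z = x`, and by the subgradient inequality the second is at most `H (z, Y x)`.

A Sobolev map is Lipschitz on countably many pieces covering almost all of `Ω`: by the weak
derivative, mollifying at scale `t` at a Lebesgue point moves the value by at most a constant times
`t`. On a piece where `Y` is Lipschitz, Rademacher's theorem makes the first function differentiable
at almost every point, and approximate continuity of `p` bounds its excess over the second by
`o(|z - x|)`. On a piece where `p` is Lipschitz, so is the conjugate `⟨p z, Y z⟩ - H (z, Y z)`, a
supremum of functions of `z` that are Lipschitz uniformly where `Y` is bounded, and the second
function is itself differentiable almost everywhere. Either way the concave function `H (·, Y x)`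
has a first-order lower bound at `x` along a set of density one. Being Lipschitz, it has that bound
in a full neighbourhood, and a concave function with a first-order lower bound is differentiable.

Since `S` preserves `μ`, the cyclic sum of `H` has integral zero along orbits; being nonpositive, it
vanishes almost everywhere, so it is maximal there. Each of its summands, as a function of the
`i`-th block, has a differentiable minorant: the summand where that block is the first argument by
the previous step, the others by the subgradient. A sum of such functions with a local maximum has
differentiable summands.
-/

/-- The set `s` has `μ`-density one at `x`. Measurability of `s` is not required. -/
def DensityOne {α : Type*} [PseudoMetricSpace α] [MeasurableSpace α] (μ : Measure α) (s : Set α)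
    (x : α) : Prop :=
  Tendsto (fun r => μ (s ∩ Metric.closedBall x r) / μ (Metric.closedBall x r)) (𝓝[>] 0) (𝓝 1)

theorem DensityOne.mono {α : Type*} [PseudoMetricSpace α] [MeasurableSpace α] {μ : Measure α}
    {s t : Set α} {x : α} (hs : DensityOne μ s x) (hst : s ⊆ t) : DensityOne μ t x :=
  tendsto_of_tendsto_of_tendsto_of_le_of_le hs tendsto_const_nhds
    (fun _ => ENNReal.div_le_div_right (measure_mono (inter_subset_inter_left _ hst)) _)
    (fun _ => ENNReal.div_le_of_le_mul (by simpa using measure_mono inter_subset_right))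

theorem hasFDerivAt_of_concaveOn_of_eventually_ge {E : Type*} [NormedAddCommGroup E]
    [NormedSpace ℝ E] {G : E → ℝ} (hG : ConcaveOn ℝ univ G) {x : E} {L : E →L[ℝ] ℝ}
    (hlow : ∀ ε > 0, ∀ᶠ z in 𝓝 x, G x + L (z - x) - ε * ‖z - x‖ ≤ G z) :
    HasFDerivAt G L x := by
  rw [hasFDerivAt_iff_isLittleO, Asymptotics.isLittleO_iff]
  intro ε hε
  have hreflect : Tendsto (fun z => (2 : ℝ) • x - z) (𝓝 x) (𝓝 x) :=
    (by fun_prop : Continuous fun z => (2 : ℝ) • x - z).tendsto' x x (by module)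
  filter_upwards [hlow ε hε, hreflect.eventually (hlow ε hε)] with z hz hz'
  have hmid := hG.2 (mem_univ z) (mem_univ ((2 : ℝ) • x - z)) one_half_pos.le one_half_pos.le
    (add_halves 1)
  rw [show (1 / 2 : ℝ) • z + (1 / 2 : ℝ) • ((2 : ℝ) • x - z) = x by module] at hmid
  rw [show (2 : ℝ) • x - z - x = -(z - x) by module, map_neg, norm_neg] at hz'
  simp only [smul_eq_mul] at hmid
  rw [Real.norm_eq_abs, abs_le]
  constructor <;> linarith

section Density

variable {E F : Type*} [NormedAddCommGroup E] [NormedSpace ℝ E] [FiniteDimensional ℝ E]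
  [MeasurableSpace E] [BorelSpace E] (ν : Measure E)

theorem ae_densityOne [IsLocallyFiniteMeasure ν] (s : Set E) :
    ∀ᵐ x ∂ν, x ∈ s → DensityOne ν s x :=
  ae_imp_of_ae_restrict (Besicovitch.ae_tendsto_measure_inter_div ν s)

theorem ae_densityOne_inter_preimage [IsLocallyFiniteMeasure ν] [TopologicalSpace F]
    [SecondCountableTopology F] (s : Set E) (u : E → F) :
    ∀ᵐ x ∂ν, x ∈ s → ∀ V ∈ 𝓝 (u x), DensityOne ν (s ∩ u ⁻¹' V) x := by
  have hbasis : ∀ᵐ x ∂ν, ∀ V ∈ TopologicalSpace.countableBasis F,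
      x ∈ s ∩ u ⁻¹' V → DensityOne ν (s ∩ u ⁻¹' V) x :=
    (ae_ball_iff (TopologicalSpace.countable_countableBasis F)).2 fun V _ => ae_densityOne ν _
  filter_upwards [hbasis] with x hx hxs V hV
  obtain ⟨W, hW, hxW, hWV⟩ :=
    (TopologicalSpace.isBasis_countableBasis F).mem_nhds_iff.1 hV
  exact (hx W hW ⟨hxs, hxW⟩).mono (inter_subset_inter_right _ (preimage_mono hWV))

variable {ν}

theorem DensityOne.eventually_exists_dist_le [ν.IsAddHaarMeasure] {s : Set E} {x : E}
    (hs : DensityOne ν s x) {δ : ℝ} (hδ : 0 < δ) :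
    ∀ᶠ z in 𝓝[≠] x, ∃ w ∈ s, dist w z ≤ δ * dist z x := by
  set q := ENNReal.ofReal ((δ / (1 + δ)) ^ Module.finrank ℝ E) with hq
  have hq0 : q ≠ 0 := by positivity
  have hradius : Tendsto (fun z => (1 + δ) * dist z x) (𝓝[≠] x) (𝓝[>] 0) :=
    tendsto_nhdsWithin_iff.2 ⟨((by fun_prop : Continuous fun z => (1 + δ) * dist z x).tendsto' x 0
      (by simp)).mono_left nhdsWithin_le_nhds,
      eventually_mem_nhdsWithin.mono fun z hz => mul_pos (by positivity) (dist_pos.2 hz)⟩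
  filter_upwards [hradius.eventually (hs.eventually_const_lt
    (ENNReal.sub_lt_self ENNReal.one_ne_top one_ne_zero hq0)), self_mem_nhdsWithin] with z hz hzx
  have hr : 0 < dist z x := dist_pos.2 hzx
  by_contra! hfar
  have hdisj : Disjoint (s ∩ Metric.closedBall x ((1 + δ) * dist z x))
      (Metric.closedBall z (δ * dist z x)) :=
    disjoint_left.2 fun w hw hwz => (hfar w hw.1).not_ge hwz
  have hsub : Metric.closedBall z (δ * dist z x) ⊆ Metric.closedBall x ((1 + δ) * dist z x) :=
    Metric.closedBall_subset_closedBall' (by linarith)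
  have hball : ν (Metric.closedBall z (δ * dist z x)) =
      q * ν (Metric.closedBall x ((1 + δ) * dist z x)) := by
    rw [hq, Measure.addHaar_closedBall_center ν x, ← Measure.addHaar_closedBall_mul ν z
      (by positivity) (by positivity)]
    congr 2
    field_simp
  have hsum : ν (s ∩ Metric.closedBall x ((1 + δ) * dist z x)) +
      q * ν (Metric.closedBall x ((1 + δ) * dist z x)) ≤
        ν (Metric.closedBall x ((1 + δ) * dist z x)) := by
    rw [← hball, ← measure_union hdisj measurableSet_closedBall]
    exact measure_mono (union_subset inter_subset_right hsub)
  refine hz.not_ge (ENNReal.le_sub_of_add_le_right ENNReal.ofReal_ne_top ?_)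
  have hpos := (Metric.measure_closedBall_pos ν x (by positivity : 0 < (1 + δ) * dist z x)).ne'
  rw [← ENNReal.mul_div_cancel_right hpos measure_closedBall_lt_top.ne (a := q),
    ENNReal.div_add_div_same]
  exact ENNReal.div_le_of_le_mul (by simpa using hsum)

theorem DensityOne.eventually_ge [ν.IsAddHaarMeasure] {s : Set E} {x : E} (hs : DensityOne ν s x)
    {G : E → ℝ} {U : Set E} (hU : U ∈ 𝓝 x) {C : NNReal} (hG : LipschitzOnWith C G U)
    {L : E →L[ℝ] ℝ} {ε : ℝ} (hε : 0 < ε)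
    (hlow : ∀ᶠ w in 𝓝[s] x, G x + L (w - x) - ε * ‖w - x‖ ≤ G w) :
    ∀ᶠ z in 𝓝 x, G x + L (z - x) - 2 * ε * ‖z - x‖ ≤ G z := by
  set δ := ε / (‖L‖ + ε + C)
  have hδ : 0 < δ := by positivity
  have hδε : (‖L‖ + ε + C) * δ = ε := by simp only [δ]; field_simp
  obtain ⟨ρ, hρ, hball⟩ := Metric.mem_nhds_iff.1
    (inter_mem hU (eventually_nhdsWithin_iff.1 hlow))
  have hnear : ∀ᶠ z in 𝓝[≠] x, z ∈ Metric.ball x (ρ / (1 + δ)) :=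
    mem_nhdsWithin_of_mem_nhds (Metric.ball_mem_nhds x (by positivity))
  have hne : ∀ᶠ z in 𝓝[≠] x, G x + L (z - x) - 2 * ε * ‖z - x‖ ≤ G z := by
    filter_upwards [hnear, hs.eventually_exists_dist_le hδ] with z hz ⟨w, hws, hwz⟩
    rw [Metric.mem_ball, lt_div_iff₀ (by positivity)] at hz
    have hwx := dist_triangle w z x
    have hw := hball (show w ∈ Metric.ball x ρ by rw [Metric.mem_ball]; linarith)
    have hz' := hball (show z ∈ Metric.ball x ρ by
      rw [Metric.mem_ball]; linarith [mul_nonneg hδ.le (dist_nonneg (x := z) (y := x))])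
    have hGw := (le_abs_self _).trans ((hG.dist_le_mul w hw.1 z hz'.1).trans
      (mul_le_mul_of_nonneg_left hwz C.coe_nonneg))
    have hLw := (le_abs_self _).trans (L.le_opNorm_of_le (dist_eq_norm z w ▸ dist_comm w z ▸ hwz))
    have hGw' := hw.2 hws
    rw [← dist_eq_norm] at hGw' ⊢
    have hLsplit : L (z - x) = L (z - w) + L (w - x) := by rw [← map_add, sub_add_sub_cancel]
    have hεw := mul_le_mul_of_nonneg_left (hwx.trans (add_le_add_left hwz _)) hε.le
    linear_combination hGw + hLw + hGw' + hεw + hLsplit + dist z x * hδε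
  rw [eventually_nhdsWithin_iff] at hne
  filter_upwards [hne] with z hz
  rcases eq_or_ne z x with rfl | hzx
  · simp
  · exact hz hzx

theorem hasFDerivAt_of_concaveOn_of_densityOne [ν.IsAddHaarMeasure] {G : E → ℝ}
    (hG : ConcaveOn ℝ univ G) {x : E} {L : E →L[ℝ] ℝ}
    (hlow : ∀ ε > 0, ∃ s, DensityOne ν s x ∧
      ∀ᶠ z in 𝓝[s] x, G x + L (z - x) - ε * ‖z - x‖ ≤ G z) :
    HasFDerivAt G L x := by
  obtain ⟨C, U, hU, hGU⟩ := hG.locallyLipschitz x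
  refine hasFDerivAt_of_concaveOn_of_eventually_ge hG fun ε hε => ?_
  obtain ⟨s, hs, hsG⟩ := hlow (ε / 2) (by positivity)
  simpa only [mul_div_cancel₀ ε two_ne_zero] using hs.eventually_ge hU hGU (by positivity) hsG

end Density

/-- Up to a `μ`-null set, the domain is a countable union of sets on each of which `f` is
Lipschitz. Lusin–Lipschitz decompositions of Sobolev maps are encoded in this form; the pieces
need not be measurable. -/
def CountablyLipschitz {α β : Type*} [PseudoEMetricSpace α] [MeasurableSpace α]
    [PseudoEMetricSpace β] (f : α → β) (μ : Measure α) : Prop :=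
  ∃ 𝒜 : Set (Set α), 𝒜.Countable ∧ (∀ A ∈ 𝒜, ∃ K, LipschitzOnWith K f A) ∧ ∀ᵐ x ∂μ, x ∈ ⋃₀ 𝒜

namespace CountablyLipschitz

variable {α β γ : Type*} [PseudoEMetricSpace α] [MeasurableSpace α] [PseudoEMetricSpace β]
  [PseudoEMetricSpace γ] {f : α → β} {μ ν : Measure α}

theorem mono_ac (hf : CountablyLipschitz f ν) (hμν : μ ≪ ν) : CountablyLipschitz f μ :=
  let ⟨𝒜, h𝒜, hLip, hcover⟩ := hf
  ⟨𝒜, h𝒜, hLip, hμν.ae_le hcover⟩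

theorem ae_of_forall (hf : CountablyLipschitz f μ) {P : α → Prop}
    (hP : ∀ K A, LipschitzOnWith K f A → ∀ᵐ x ∂μ, x ∈ A → P x) : ∀ᵐ x ∂μ, P x := by
  obtain ⟨𝒜, h𝒜, hLip, hcover⟩ := hf
  have hpieces : ∀ᵐ x ∂μ, ∀ A ∈ 𝒜, x ∈ A → P x := (ae_ball_iff h𝒜).2 fun A hA =>
    let ⟨K, hK⟩ := hLip A hA
    hP K A hK
  filter_upwards [hpieces, hcover] with x hx ⟨A, hA, hxA⟩
  exact hx A hA hxA

theorem of_lipschitzWith {K : NNReal} (hf : LipschitzWith K f) : CountablyLipschitz f μ :=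
  ⟨{univ}, countable_singleton _, by simpa using ⟨K, hf⟩, by simp⟩

theorem comp [MeasurableSpace β] {ρ : Measure β} {g : β → γ} (hg : CountablyLipschitz g ρ)
    (hf : CountablyLipschitz f μ) (hfρ : Measure.QuasiMeasurePreserving f μ ρ) :
    CountablyLipschitz (g ∘ f) μ := by
  obtain ⟨𝒜, h𝒜, hLip𝒜, hcover𝒜⟩ := hf
  obtain ⟨ℬ, hℬ, hLipℬ, hcoverℬ⟩ := hg
  refine ⟨image2 (fun A B => A ∩ f ⁻¹' B) 𝒜 ℬ, h𝒜.image2 hℬ _, ?_, ?_⟩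
  · rintro _ ⟨A, hA, B, hB, rfl⟩
    obtain ⟨K, hK⟩ := hLip𝒜 A hA
    obtain ⟨K', hK'⟩ := hLipℬ B hB
    exact ⟨K' * K, hK'.comp (hK.mono inter_subset_left) fun _ hx => hx.2⟩
  · filter_upwards [hcover𝒜, hfρ.ae hcoverℬ] with x ⟨A, hA, hxA⟩ ⟨B, hB, hxB⟩
    exact ⟨_, mem_image2_of_mem hA hB, hxA, hxB⟩

theorem lipschitz_comp {g : β → γ} {K : NNReal} (hg : LipschitzWith K g)
    (hf : CountablyLipschitz f μ) : CountablyLipschitz (g ∘ f) μ := by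
  obtain ⟨𝒜, h𝒜, hLip, hcover⟩ := hf
  refine ⟨𝒜, h𝒜, fun A hA => ?_, hcover⟩
  obtain ⟨K', hK'⟩ := hLip A hA
  exact ⟨K * K', hg.comp_lipschitzOnWith hK'⟩

theorem iterate {T : α → α} (hT : CountablyLipschitz T μ)
    (hTμ : Measure.QuasiMeasurePreserving T μ μ) (n : ℕ) : CountablyLipschitz T^[n] μ := by
  induction n with
  | zero => exact of_lipschitzWith LipschitzWith.id
  | succ n ih => exact ih.comp hT hTμ

theorem pi {ι : Type*} [Fintype ι] {g : ι → α → β} (hg : ∀ i, CountablyLipschitz (g i) μ) :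
    CountablyLipschitz (fun x i => g i x) μ := by
  choose 𝒜 h𝒜 hLip hcover using hg
  refine ⟨(fun A : ι → Set α => ⋂ i, A i) '' univ.pi 𝒜, (countable_univ_pi h𝒜).image _, ?_, ?_⟩
  · rintro _ ⟨A, hA, rfl⟩
    choose K hK using fun i => hLip i (A i) (hA i (mem_univ i))
    refine ⟨Finset.univ.sup K, fun x hx y hy => edist_pi_le_iff.2 fun i => ?_⟩
    refine (hK i (mem_iInter.1 hx i) (mem_iInter.1 hy i)).trans ?_
    gcongr
    exact Finset.le_sup (Finset.mem_univ i)
  · filter_upwards [ae_all_iff.2 hcover] with x hx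
    choose A hA hxA using hx
    exact ⟨_, mem_image_of_mem _ fun i _ => hA i, mem_iInter.2 hxA⟩

end CountablyLipschitz

/-- A condition `dist x y < δ` is removed by cutting the pieces with balls of radius `δ / 2`
centred on a dense sequence. -/
theorem countablyLipschitz_of_forall_dist_lt {α β : Type*} [PseudoMetricSpace α]
    [TopologicalSpace.SeparableSpace α] [MeasurableSpace α] [PseudoMetricSpace β] {f : α → β}
    {μ : Measure α} {A : ℕ → Set α} {K : ℕ → NNReal} {δ : ℕ → ℝ} (hδ : ∀ n, 0 < δ n)
    (hf : ∀ n, ∀ x ∈ A n, ∀ y ∈ A n, dist x y < δ n → dist (f x) (f y) ≤ K n * dist x y)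
    (hA : ∀ᵐ x ∂μ, ∃ n, x ∈ A n) : CountablyLipschitz f μ := by
  cases isEmpty_or_nonempty α
  · exact ⟨∅, countable_empty, by simp, .of_forall isEmptyElim⟩
  refine ⟨range fun nk : ℕ × ℕ =>
    A nk.1 ∩ Metric.ball (TopologicalSpace.denseSeq α nk.2) (δ nk.1 / 2),
    countable_range _, ?_, ?_⟩
  · rintro _ ⟨⟨n, k⟩, rfl⟩
    refine ⟨K n, LipschitzOnWith.of_dist_le_mul fun x hx y hy => hf n x hx.1 y hy.1 ?_⟩
    linarith [dist_triangle_right x y (TopologicalSpace.denseSeq α k), Metric.mem_ball.1 hx.2,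
      Metric.mem_ball.1 hy.2]
  · filter_upwards [hA] with x ⟨n, hx⟩
    obtain ⟨k, hk⟩ := (TopologicalSpace.denseRange_denseSeq α).exists_dist_lt x (half_pos (hδ n))
    exact ⟨_, mem_range_self (n, k), hx, hk⟩

theorem integrable_smul_of_tsupport_subset {X F : Type*} [TopologicalSpace X] [R1Space X]
    [MeasurableSpace X] [OpensMeasurableSpace X] {μ : Measure X}
    [NormedAddCommGroup F] [NormedSpace ℝ F] {Ω : Set X} {g : X → F}
    (hg : LocallyIntegrableOn g Ω μ) {θ : X → ℝ} (hθ : Continuous θ)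
    (hc : HasCompactSupport θ) (hs : tsupport θ ⊆ Ω) :
    Integrable (fun z => θ z • g z) μ := by
  refine (integrableOn_iff_integrable_of_support_subset fun z hz => ?_).1
    ((hg.integrableOn_compact_subset hs hc).continuousOn_smul_of_subset hθ.continuousOn hc
      (isClosed_tsupport θ).measurableSet subset_rfl)
  exact subset_tsupport θ (left_ne_zero_of_smul hz)

/-- `f'` is a weak (distributional) Fréchet derivative of `f` on `Ω` with respect to `ν`; smooth
compactly supported functions serve as test functions. -/
structure HasWeakFDerivOn {E F : Type*} [NormedAddCommGroup E] [NormedSpace ℝ E]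
    [MeasurableSpace E] [NormedAddCommGroup F] [NormedSpace ℝ F]
    (f : E → F) (f' : E → E →L[ℝ] F) (Ω : Set E) (ν : Measure E) : Prop where
  locallyIntegrableOn : LocallyIntegrableOn f Ω ν
  locallyIntegrableOn_fderiv : LocallyIntegrableOn f' Ω ν
  integral_fderiv_smul : ∀ φ : E → ℝ, ContDiff ℝ (⊤ : ℕ∞) φ → HasCompactSupport φ →
    tsupport φ ⊆ Ω → ∀ v, ∫ x in Ω, fderiv ℝ φ x v • f x ∂ν = -∫ x in Ω, φ x • f' x v ∂ν

theorem trace_fderiv_eq_sum {E ι : Type*} [NormedAddCommGroup E] [NormedSpace ℝ E]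
    [FiniteDimensional ℝ E] [Fintype ι] (b : Module.Basis ι ℝ E) {V : E → E} {z : E}
    (hV : DifferentiableAt ℝ V z) :
    LinearMap.trace ℝ E (fderiv ℝ V z) =
      ∑ i, fderiv ℝ (fun z => b.coord i (V z)) z (b i) := by
  classical
  have hcoord : ∀ i, fderiv ℝ (fun z => b.coord i (V z)) z =
      (b.coord i).toContinuousLinearMap ∘L fderiv ℝ V z := fun i =>
    ((b.coord i).toContinuousLinearMap.hasFDerivAt.comp z hV.hasFDerivAt).fderiv
  simp only [hcoord]
  simp [LinearMap.trace_eq_matrix_trace ℝ b, Matrix.trace, LinearMap.toMatrix_apply]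

namespace HasWeakFDerivOn

variable {E F : Type*} [NormedAddCommGroup E] [NormedSpace ℝ E] [MeasurableSpace E]
  [NormedAddCommGroup F] [NormedSpace ℝ F]
  {f : E → F} {f' : E → E →L[ℝ] F} {Ω : Set E} {ν : Measure E}

theorem integral_fderiv_smul_eq_neg (hf : HasWeakFDerivOn f f' Ω ν) {φ : E → ℝ}
    (hφ : ContDiff ℝ (⊤ : ℕ∞) φ) (hφc : HasCompactSupport φ) (hφΩ : tsupport φ ⊆ Ω) (v : E) :
    ∫ x, fderiv ℝ φ x v • f x ∂ν = -∫ x, φ x • f' x v ∂ν := by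
  have hφ0 : ∀ x ∉ Ω, φ x = 0 := fun x hx =>
    image_eq_zero_of_notMem_tsupport fun h => hx (hφΩ h)
  have hφ'0 : ∀ x ∉ Ω, fderiv ℝ φ x = 0 := fun x hx =>
    image_eq_zero_of_notMem_tsupport fun h => hx (hφΩ (tsupport_fderiv_subset ℝ h))
  have h := hf.integral_fderiv_smul φ hφ hφc hφΩ v
  rwa [setIntegral_eq_integral_of_forall_compl_eq_zero fun x hx => by simp [hφ'0 x hx],
    setIntegral_eq_integral_of_forall_compl_eq_zero fun x hx => by simp [hφ0 x hx]] at h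

variable [FiniteDimensional ℝ E] [BorelSpace E]

theorem integral_trace_fderiv_smul (hf : HasWeakFDerivOn f f' Ω ν) {V : E → E}
    (hV : ContDiff ℝ (⊤ : ℕ∞) V) (hVc : HasCompactSupport V) (hVΩ : tsupport V ⊆ Ω) :
    ∫ z, LinearMap.trace ℝ E (fderiv ℝ V z) • f z ∂ν = -∫ z, f' z (V z) ∂ν := by
  set b := Module.finBasis ℝ E
  set φ : Fin (Module.finrank ℝ E) → E → ℝ := fun i z => b.coord i (V z)
  have hφ : ∀ i, ContDiff ℝ (⊤ : ℕ∞) (φ i) := fun i =>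
    (b.coord i).toContinuousLinearMap.contDiff.comp hV
  have hφc : ∀ i, HasCompactSupport (φ i) := fun i => hVc.comp_left (map_zero (b.coord i))
  have hφΩ : ∀ i, tsupport (φ i) ⊆ Ω := fun i =>
    (closure_mono (support_comp_subset (map_zero (b.coord i)) V)).trans hVΩ
  have hint : ∀ i, Integrable (fun z => fderiv ℝ (φ i) z (b i) • f z) ν := fun i =>
    integrable_smul_of_tsupport_subset hf.locallyIntegrableOn
      (((hφ i).continuous_fderiv (by simp)).clm_apply continuous_const)
      ((hφc i).fderiv_apply ℝ (b i)) ((tsupport_fderiv_apply_subset ℝ (b i)).trans (hφΩ i))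
  have hint' : ∀ i, Integrable (fun z => φ i z • f' z (b i)) ν := fun i =>
    (ContinuousLinearMap.apply ℝ F (b i)).integrable_comp (integrable_smul_of_tsupport_subset
      hf.locallyIntegrableOn_fderiv (hφ i).continuous (hφc i) (hφΩ i))
  calc ∫ z, LinearMap.trace ℝ E (fderiv ℝ V z) • f z ∂ν
      = ∑ i, ∫ z, fderiv ℝ (φ i) z (b i) • f z ∂ν := by
        simp only [trace_fderiv_eq_sum b (hV.differentiable (by simp) _), Finset.sum_smul]
        exact integral_finsetSum _ fun i _ => hint i
    _ = -∑ i, ∫ z, φ i z • f' z (b i) ∂ν := by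
        rw [← Finset.sum_neg_distrib]
        exact Finset.sum_congr rfl fun i _ =>
          hf.integral_fderiv_smul_eq_neg (hφ i) (hφc i) (hφΩ i) (b i)
    _ = -∫ z, f' z (V z) ∂ν := by
        rw [← integral_finsetSum _ fun i _ => hint' i]
        simp only [← map_smul, ← map_sum, φ, b.coord_apply, b.sum_repr]

end HasWeakFDerivOn

/-- The kernel `z ↦ t⁻ᵈ η ((z - x) / t)` with `d = dim E`: it has the same mass as `η` and
concentrates at `x` as `t → 0⁺`. -/
def rescale {E : Type*} [NormedAddCommGroup E] [NormedSpace ℝ E] (η : E → ℝ) (x : E) (t : ℝ)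
    (z : E) : ℝ :=
  (t ^ Module.finrank ℝ E)⁻¹ * η (t⁻¹ • (z - x))

/-- The divergence of the vector field `y ↦ η y • y`, written out by the product rule. -/
def radialDiv {E : Type*} [NormedAddCommGroup E] [NormedSpace ℝ E] (η : E → ℝ) (y : E) : ℝ :=
  Module.finrank ℝ E * η y + fderiv ℝ η y y

section Rescale

variable {E F : Type*} [NormedAddCommGroup E] [NormedSpace ℝ E] {η : E → ℝ} {x : E} {a t M : ℝ}

theorem contDiff_rescale {n : WithTop ℕ∞} (hη : ContDiff ℝ n η) : ContDiff ℝ n (rescale η x t) :=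
  contDiff_const.mul (hη.comp (contDiff_const.smul (contDiff_id.sub contDiff_const)))

theorem abs_rescale_le (hM : ∀ y, |η y| ≤ M) (ht : 0 < t) (z : E) :
    |rescale η x t z| ≤ M / t ^ Module.finrank ℝ E := by
  rw [rescale, abs_mul, abs_of_pos (by positivity), inv_mul_eq_div]
  gcongr
  exact hM _

theorem support_rescale_subset (hη : support η ⊆ Metric.closedBall 0 a) (ht : 0 < t) :
    support (rescale η x t) ⊆ Metric.closedBall x (a * t) := by
  intro z hz
  have hmem := hη (right_ne_zero_of_mul hz)
  rwa [mem_closedBall_zero_iff, norm_smul, norm_inv, Real.norm_of_nonneg ht.le, ← div_eq_inv_mul,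
    div_le_iff₀ ht, ← dist_eq_norm] at hmem

theorem rescale_comp_sub (η : E → ℝ) (x c : E) (t : ℝ) :
    rescale (fun y => η (y - t⁻¹ • (c - x))) x t = rescale η c t := by
  funext z
  rw [rescale, rescale, ← smul_sub, sub_sub_sub_cancel_right]

theorem support_radialDiv_subset : support (radialDiv η) ⊆ tsupport η := by
  intro y hy
  by_contra hyη
  refine hy ?_
  rw [radialDiv, image_eq_zero_of_notMem_tsupport hyη,
    image_eq_zero_of_notMem_tsupport (f := fderiv ℝ η) fun h => hyη (tsupport_fderiv_subset ℝ h)]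
  simp

theorem continuous_radialDiv (hη : ContDiff ℝ 1 η) : Continuous (radialDiv η) :=
  (continuous_const.mul hη.continuous).add
    ((hη.continuous_fderiv one_ne_zero).clm_apply continuous_id)

theorem exists_forall_abs_radialDiv_le (hη : ContDiff ℝ 1 η) (hc : HasCompactSupport η) :
    ∃ M, ∀ y, |radialDiv η y| ≤ M :=
  (hc.mono' support_radialDiv_subset).exists_bound_of_continuous (continuous_radialDiv hη)

theorem hasDerivAt_rescale (hη : Differentiable ℝ η) (z : E) (ht : t ≠ 0) :
    HasDerivAt (fun t => rescale η x t z) (-t⁻¹ * rescale (radialDiv η) x t z) t := by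
  have hpow := (hasDerivAt_pow (Module.finrank ℝ E) t).inv (pow_ne_zero _ ht)
  have hη' := (hη (t⁻¹ • (z - x))).hasFDerivAt.comp_hasDerivAt t
    ((hasDerivAt_inv ht).smul_const (z - x))
  refine (hpow.mul hη').congr_deriv ?_
  rw [rescale, radialDiv]
  simp only [comp_apply, Pi.inv_apply, neg_smul, map_neg, map_smul, smul_eq_mul]
  rcases Module.finrank ℝ E with _ | d
  · simp only [Nat.cast_zero, zero_mul, pow_zero, inv_one, neg_zero]
    field_simp
    ring
  · simp only [Nat.cast_add, Nat.cast_one, Nat.add_sub_cancel]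
    field_simp
    ring

theorem trace_fderiv_rescale_smul [FiniteDimensional ℝ E] (hη : Differentiable ℝ η) (z : E) :
    LinearMap.trace ℝ E (fderiv ℝ (fun z => rescale η x t z • (z - x)) z) =
      rescale (radialDiv η) x t z := by
  have hinner : HasFDerivAt (fun z => t⁻¹ • (z - x)) (t⁻¹ • ContinuousLinearMap.id ℝ E) z :=
    ((hasFDerivAt_id z).sub_const x).const_smul t⁻¹
  have hrescale : HasFDerivAt (rescale η x t) _ z :=
    ((hη (t⁻¹ • (z - x))).hasFDerivAt.comp z hinner).const_mul _
  have hfield := hrescale.fun_smul ((hasFDerivAt_id z).sub_const x)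
  rw [show fderiv ℝ (fun z => rescale η x t z • (z - x)) z = _ from hfield.fderiv]
  simp only [rescale, radialDiv, ContinuousLinearMap.comp_smul, ContinuousLinearMap.comp_id,
    ContinuousLinearMap.toLinearMap_add, ContinuousLinearMap.toLinearMap_smul,
    ContinuousLinearMap.coe_id, ContinuousLinearMap.coe_smulRight, map_add, map_smul,
    LinearMap.trace_id, LinearMap.trace_smulRight, LinearMap.smul_apply,
    ContinuousLinearMap.coe_coe, smul_eq_mul, id_eq]
  ring

theorem integral_rescale [FiniteDimensional ℝ E] [MeasurableSpace E] [BorelSpace E]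
    (ν : Measure E) [ν.IsAddHaarMeasure] (η : E → ℝ) (x : E) (ht : 0 < t) :
    ∫ z, rescale η x t z ∂ν = ∫ y, η y ∂ν := by
  simp only [rescale]
  rw [integral_const_mul, integral_sub_right_eq_self (fun z => η (t⁻¹ • z)) x,
    Measure.integral_comp_inv_smul_of_nonneg ν η ht.le, smul_eq_mul,
    inv_mul_cancel_left₀ (by positivity)]

theorem hasDerivAt_integral_rescale_smul [FiniteDimensional ℝ E] [MeasurableSpace E]
    [BorelSpace E] [NormedAddCommGroup F] [NormedSpace ℝ F] {μ : Measure E} {f : E → F}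
    (hf : Integrable f μ) (hη : ContDiff ℝ 1 η) (hc : HasCompactSupport η) (ht : 0 < t) :
    HasDerivAt (fun t => ∫ z, rescale η x t z • f z ∂μ)
      (-t⁻¹ • ∫ z, rescale (radialDiv η) x t z • f z ∂μ) t := by
  obtain ⟨M, hM⟩ := hc.exists_bound_of_continuous hη.continuous
  obtain ⟨M', hM'⟩ := exists_forall_abs_radialDiv_le hη hc
  have hM'0 : 0 ≤ M' := (abs_nonneg _).trans (hM' 0)
  have hmeas : ∀ s, AEStronglyMeasurable (fun z => rescale η x s z • f z) μ := fun s =>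
    (contDiff_rescale hη).continuous.aestronglyMeasurable.smul hf.aestronglyMeasurable
  have hmeas' : AEStronglyMeasurable (rescale (radialDiv η) x t) μ :=
    (contDiff_rescale (n := 0) (contDiff_zero.2
      (continuous_radialDiv hη))).continuous.aestronglyMeasurable
  have hbound : ∀ z, ∀ s ∈ Ioi (t / 2), ‖(-s⁻¹ * rescale (radialDiv η) x s z) • f z‖ ≤
      (t / 2)⁻¹ * (M' / (t / 2) ^ Module.finrank ℝ E) * ‖f z‖ := by
    intro z s hs
    have hts : t / 2 < s := hs
    have hs0 : 0 < s := (half_pos ht).trans hts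
    rw [norm_smul, norm_mul, norm_neg, norm_inv, Real.norm_of_nonneg hs0.le, Real.norm_eq_abs]
    gcongr
    exact (abs_rescale_le hM' hs0 z).trans (by gcongr)
  have hderiv := (hasDerivAt_integral_of_dominated_loc_of_deriv_le
    (Ioi_mem_nhds (half_lt_self ht)) (.of_forall hmeas)
    (hf.bdd_smul _ (contDiff_rescale hη).continuous.aestronglyMeasurable
      (.of_forall (abs_rescale_le hM ht)))
    ((hmeas'.const_mul _).smul hf.aestronglyMeasurable) (.of_forall hbound) (hf.norm.const_mul _)
    (.of_forall fun z s hs => (hasDerivAt_rescale (hη.differentiable one_ne_zero) z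
      ((half_pos ht).trans hs).ne').smul_const (f z))).2
  simpa only [mul_smul, integral_smul] using hderiv

end Rescale

/-- `x` is a Lebesgue point of `f`, with averages taken over balls centred at `x`. -/
def IsLebesguePoint {α F : Type*} [PseudoMetricSpace α] [MeasurableSpace α]
    [NormedAddCommGroup F] (f : α → F) (μ : Measure α) (x : α) : Prop :=
  Tendsto (fun r => ⨍ y in Metric.closedBall x r, ‖f y - f x‖ ∂μ) (𝓝[>] 0) (𝓝 0)

theorem ae_isLebesguePoint {E F : Type*} [NormedAddCommGroup E] [NormedSpace ℝ E]
    [FiniteDimensional ℝ E] [MeasurableSpace E] [BorelSpace E] [NormedAddCommGroup F]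
    {f : E → F} {Ω : Set E} {ν : Measure E} [IsLocallyFiniteMeasure ν] (hΩ : IsOpen Ω)
    (hf : LocallyIntegrableOn f Ω ν) : ∀ᵐ x ∂ν, x ∈ Ω → IsLebesguePoint f ν x := by
  refine measure_null_of_locally_null _ fun x₀ hx₀ => ?_
  obtain ⟨ρ, hρ, hball⟩ := Metric.nhds_basis_closedBall.mem_iff.1
    (hΩ.mem_nhds (Classical.not_imp.1 hx₀).1)
  refine ⟨_, inter_mem_nhdsWithin _ (Metric.ball_mem_nhds x₀ hρ), ?_⟩
  have hint : Integrable ((Metric.closedBall x₀ ρ).indicator f) ν :=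
    (integrable_indicator_iff measurableSet_closedBall).2
      (hf.integrableOn_compact_subset hball (isCompact_closedBall _ _))
  have heq : ∀ y ∈ Metric.ball x₀ ρ, (Metric.closedBall x₀ ρ).indicator f y = f y := fun y hy =>
    indicator_of_mem (Metric.ball_subset_closedBall hy) f
  refine measure_mono_null ?_ (ae_iff.1 ((Besicovitch.vitaliFamily ν).ae_tendsto_average_norm_sub
    hint.locallyIntegrable))
  rintro x ⟨hx, hxρ⟩ hlim
  refine hx fun _ => (hlim.comp (Besicovitch.tendsto_filterAt ν x)).congr' ?_
  obtain ⟨δ, hδ, hsub⟩ := Metric.nhds_basis_closedBall.mem_iff.1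
    (Metric.isOpen_ball.mem_nhds hxρ)
  filter_upwards [Ioc_mem_nhdsGT hδ] with r hr
  simp only [comp_apply, setAverage_eq]
  congr 1
  refine setIntegral_congr_fun measurableSet_closedBall fun y hy => ?_
  simp only [heq x hxρ, heq y (hsub (Metric.closedBall_subset_closedBall hr.2 hy))]

section Mollification

variable {E F : Type*} [NormedAddCommGroup E] [NormedSpace ℝ E] [FiniteDimensional ℝ E]
  [MeasurableSpace E] [BorelSpace E] [NormedAddCommGroup F] {ν : Measure E} {x : E} {Ω : Set E}

theorem IsLebesguePoint.eventually_average_norm_le [ν.IsOpenPosMeasure]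
    [IsLocallyFiniteMeasure ν] {f : E → F} (hx : IsLebesguePoint f ν x)
    (hΩ : Ω ∈ 𝓝 x) (hf : LocallyIntegrableOn f Ω ν) :
    ∀ᶠ r in 𝓝[>] 0, ⨍ y in Metric.closedBall x r, ‖f y‖ ∂ν ≤ 1 + ‖f x‖ := by
  obtain ⟨ρ, hρ, hball⟩ := Metric.nhds_basis_closedBall.mem_iff.1 hΩ
  filter_upwards [hx.eventually_le_const one_pos, Ioc_mem_nhdsGT hρ] with r hr hrρ
  have hint : IntegrableOn f (Metric.closedBall x r) ν := hf.integrableOn_compact_subset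
    ((Metric.closedBall_subset_closedBall hrρ.2).trans hball) (isCompact_closedBall _ _)
  have hsub : IntegrableOn (fun y => ‖f y - f x‖) (Metric.closedBall x r) ν :=
    (hint.sub (integrableOn_const measure_closedBall_lt_top.ne)).norm
  have hconst : IntegrableOn (fun _ => ‖f x‖) (Metric.closedBall x r) ν :=
    integrableOn_const measure_closedBall_lt_top.ne
  calc ⨍ y in Metric.closedBall x r, ‖f y‖ ∂ν
      ≤ ⨍ y in Metric.closedBall x r, (‖f y - f x‖ + ‖f x‖) ∂ν :=
        integral_mono hint.norm.to_average (hsub.add hconst).to_average fun y =>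
          by simpa using norm_add_le (f y - f x) (f x)
    _ = (⨍ y in Metric.closedBall x r, ‖f y - f x‖ ∂ν) + ‖f x‖ := by
        rw [average, integral_add hsub.to_average hconst.to_average]
        congr 1
        exact setAverage_const (Metric.measure_closedBall_pos ν x hrρ.1).ne'
          measure_closedBall_lt_top.ne _
    _ ≤ 1 + ‖f x‖ := by gcongr

variable [NormedSpace ℝ F] {f : E → F} {f' : E → E →L[ℝ] F} {η : E → ℝ}
  {a t R M : ℝ}

theorem HasWeakFDerivOn.hasDerivAt_integral_rescale_smul (hf : HasWeakFDerivOn f f' Ω ν)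
    (hη : ContDiff ℝ (⊤ : ℕ∞) η) (hηa : tsupport η ⊆ Metric.closedBall 0 a)
    (hR : Metric.closedBall x R ⊆ Ω) (ht : 0 < t) (htR : a * t < R) :
    HasDerivAt (fun t => ∫ z, rescale η x t z • f z ∂ν)
      (t⁻¹ • ∫ z, rescale η x t z • f' z (z - x) ∂ν) t := by
  have hη1 : ContDiff ℝ 1 η := hη.of_le (by simp)
  have hlocal : ∀ {θ : E → ℝ}, support θ ⊆ Metric.closedBall 0 a → ∀ {s}, 0 < s → a * s < R →
      ∫ z in Metric.closedBall x R, rescale θ x s z • f z ∂ν = ∫ z, rescale θ x s z • f z ∂ν := by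
    intro θ hθ s hs hsR
    refine setIntegral_eq_integral_of_forall_compl_eq_zero fun z hz => ?_
    rw [notMem_support.1 fun h => hz (Metric.closedBall_subset_closedBall hsR.le
      (support_rescale_subset hθ hs h)), zero_smul]
  have htsupp : tsupport (rescale η x t) ⊆ Metric.closedBall x (a * t) := closure_minimal
    (support_rescale_subset ((subset_tsupport η).trans hηa) ht) Metric.isClosed_closedBall
  have hVsupp : tsupport (fun z => rescale η x t z • (z - x)) ⊆ Metric.closedBall x (a * t) :=
    (tsupport_smul_subset_left _ _).trans htsupp
  have hdiv := hf.integral_trace_fderiv_smul (V := fun z => rescale η x t z • (z - x))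
    ((contDiff_rescale hη).smul (contDiff_id.sub contDiff_const))
    ((isCompact_closedBall _ _).of_isClosed_subset (isClosed_tsupport _) hVsupp)
    (hVsupp.trans ((Metric.closedBall_subset_closedBall htR.le).trans hR))
  simp only [trace_fderiv_rescale_smul (hη1.differentiable one_ne_zero), map_smul] at hdiv
  have hball : IntegrableOn f (Metric.closedBall x R) ν :=
    hf.locallyIntegrableOn.integrableOn_compact_subset hR (isCompact_closedBall _ _)
  refine ((_root_.hasDerivAt_integral_rescale_smul (x := x) hball hη1
    ((isCompact_closedBall _ _).of_isClosed_subset (isClosed_tsupport η) hηa)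
    ht).congr_of_eventuallyEq ?_).congr_deriv ?_
  · have hnear : ∀ᶠ s in 𝓝 t, a * s < R :=
      (continuous_const_mul a).continuousAt.eventually_lt_const htR
    filter_upwards [lt_mem_nhds ht, hnear] with s hs hsR
    exact (hlocal ((subset_tsupport η).trans hηa) hs hsR).symm
  · rw [hlocal (support_radialDiv_subset.trans hηa) ht htR, hdiv, smul_neg, neg_smul, neg_neg]

variable [ν.IsAddHaarMeasure]

theorem norm_integral_rescale_smul_apply_le (hM : ∀ y, |η y| ≤ M)
    (hηa : support η ⊆ Metric.closedBall 0 a) (ha : 0 < a) (ht : 0 < t)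
    (hf' : IntegrableOn f' (Metric.closedBall x (a * t)) ν) :
    ‖t⁻¹ • ∫ z, rescale η x t z • f' z (z - x) ∂ν‖ ≤
      M * a ^ (Module.finrank ℝ E + 1) * ν.real (Metric.ball 0 1) *
        ⨍ z in Metric.closedBall x (a * t), ‖f' z‖ ∂ν := by
  have hM0 : 0 ≤ M := (abs_nonneg _).trans (hM 0)
  have hb : 0 < ν.real (Metric.ball (0 : E) 1) :=
    ENNReal.toReal_pos (Metric.measure_ball_pos _ _ one_pos).ne' measure_ball_lt_top.ne
  rw [← setIntegral_eq_integral_of_forall_compl_eq_zero (s := Metric.closedBall x (a * t))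
    fun z hz => by rw [notMem_support.1 fun h => hz (support_rescale_subset hηa ht h), zero_smul]]
  have hpoint : ∀ z ∈ Metric.closedBall x (a * t), ‖rescale η x t z • f' z (z - x)‖ ≤
      M / t ^ Module.finrank ℝ E * (a * t) * ‖f' z‖ := by
    intro z hz
    rw [mem_closedBall_iff_norm] at hz
    rw [norm_smul, mul_assoc, mul_comm (a * t)]
    gcongr
    · exact abs_rescale_le hM ht z
    · exact (f' z).le_opNorm_of_le hz
  have hle := norm_integral_le_of_norm_le (hf'.norm.const_mul _)
    ((ae_restrict_iff' measurableSet_closedBall).2 (.of_forall hpoint))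
  rw [integral_const_mul] at hle
  rw [norm_smul, norm_inv, Real.norm_of_nonneg ht.le, setAverage_eq,
    Measure.addHaar_real_closedBall _ _ (by positivity), mul_pow, smul_eq_mul, inv_mul_le_iff₀ ht]
  refine hle.trans_eq ?_
  field_simp
  ring

theorem IsLebesguePoint.tendsto_integral_rescale_smul [CompleteSpace F]
    (hx : IsLebesguePoint f ν x) (hΩ : Ω ∈ 𝓝 x) (hf : LocallyIntegrableOn f Ω ν)
    (hM : ∀ y, |η y| ≤ M) (hηa : support η ⊆ Metric.closedBall 0 a) (ha : 0 < a)
    (hη1 : ∫ y, η y ∂ν = 1) :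
    Tendsto (fun t => ∫ z, rescale η x t z • f z ∂ν) (𝓝[>] 0) (𝓝 (f x)) := by
  obtain ⟨ρ, hρ, hball⟩ := Metric.nhds_basis_closedBall.mem_iff.1 hΩ
  have hb : 0 < ν.real (Metric.ball (0 : E) 1) :=
    ENNReal.toReal_pos (Metric.measure_ball_pos _ _ one_pos).ne' measure_ball_lt_top.ne
  have hscale : Tendsto (fun t => a * t) (𝓝[>] 0) (𝓝[>] 0) :=
    tendsto_nhdsWithin_iff.2 ⟨((continuous_const_mul a).tendsto' 0 0 (mul_zero a)).mono_left
      nhdsWithin_le_nhds, eventually_mem_nhdsWithin.mono fun t ht => mul_pos ha ht⟩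
  have hpos : ∀ᶠ t : ℝ in 𝓝[>] 0, 0 < t := self_mem_nhdsWithin
  refine tendsto_integral_smul_of_tendsto_average_norm_sub
    (M * a ^ Module.finrank ℝ E * ν.real (Metric.ball 0 1)) (hx.comp hscale) ?_ ?_ ?_ ?_
  · filter_upwards [hscale.eventually (Ioc_mem_nhdsGT hρ)] with t ht
    exact hf.integrableOn_compact_subset
      ((Metric.closedBall_subset_closedBall ht.2).trans hball) (isCompact_closedBall _ _)
  · exact tendsto_const_nhds.congr' (hpos.mono fun t ht =>
      (hη1.symm.trans (integral_rescale ν η x ht).symm))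
  · exact hpos.mono fun t ht => support_rescale_subset hηa ht
  · filter_upwards [hpos] with t ht z
    refine (abs_rescale_le hM ht z).trans_eq ?_
    rw [Measure.addHaar_real_closedBall _ _ (by positivity), mul_pow]
    field_simp

theorem HasWeakFDerivOn.norm_integral_rescale_smul_sub_le [CompleteSpace F]
    (hf : HasWeakFDerivOn f f' Ω ν) (hη : ContDiff ℝ (⊤ : ℕ∞) η) (hM : ∀ y, |η y| ≤ M)
    (hηa : tsupport η ⊆ Metric.closedBall 0 a) (ha : 0 < a) (hη1 : ∫ y, η y ∂ν = 1)
    (hx : IsLebesguePoint f ν x) (hR : Metric.closedBall x R ⊆ Ω) {A : ℝ}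
    (hA : ∀ r, 0 < r → r < R → ⨍ z in Metric.closedBall x r, ‖f' z‖ ∂ν ≤ A)
    (ht : 0 < t) (htR : a * t < R) :
    ‖∫ z, rescale η x t z • f z ∂ν - f x‖ ≤
      M * a ^ (Module.finrank ℝ E + 1) * ν.real (Metric.ball 0 1) * A * t := by
  have hM0 : 0 ≤ M := (abs_nonneg _).trans (hM 0)
  have hηa' : support η ⊆ Metric.closedBall 0 a := (subset_tsupport η).trans hηa
  have hΩ : Ω ∈ 𝓝 x := mem_of_superset (Metric.closedBall_mem_nhds x (by nlinarith)) hR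
  refine le_of_tendsto ((hx.tendsto_integral_rescale_smul hΩ hf.locallyIntegrableOn hM hηa' ha
    hη1).const_sub _).norm ?_
  filter_upwards [Ioo_mem_nhdsGT ht] with s hs
  have hscale : ∀ τ ∈ Icc s t, 0 < τ ∧ a * τ < R := fun τ hτ =>
    ⟨hs.1.trans_le hτ.1, (mul_le_mul_of_nonneg_left hτ.2 ha.le).trans_lt htR⟩
  have hderiv_le : ∀ τ ∈ Icc s t, ‖τ⁻¹ • ∫ z, rescale η x τ z • f' z (z - x) ∂ν‖ ≤
      M * a ^ (Module.finrank ℝ E + 1) * ν.real (Metric.ball 0 1) * A := by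
    intro τ hτ
    obtain ⟨hτ0, hτR⟩ := hscale τ hτ
    have hint : IntegrableOn f' (Metric.closedBall x (a * τ)) ν :=
      hf.locallyIntegrableOn_fderiv.integrableOn_compact_subset
        ((Metric.closedBall_subset_closedBall hτR.le).trans hR) (isCompact_closedBall _ _)
    refine (norm_integral_rescale_smul_apply_le hM hηa' ha hτ0 hint).trans ?_
    gcongr
    exact hA _ (by positivity) hτR
  have hmean := (convex_Icc s t).norm_image_sub_le_of_norm_hasDerivWithin_le
    (fun τ hτ => (hf.hasDerivAt_integral_rescale_smul hη hηa hR (hscale τ hτ).1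
      (hscale τ hτ).2).hasDerivWithinAt)
    hderiv_le (left_mem_Icc.2 hs.2.le) (right_mem_Icc.2 hs.2.le)
  refine hmean.trans ?_
  have hbound := (norm_nonneg _).trans (hderiv_le t (right_mem_Icc.2 hs.2.le))
  rw [Real.norm_of_nonneg (sub_nonneg.2 hs.2.le)]
  gcongr
  exact sub_le_self t hs.1.le

end Mollification

section Sobolev

variable {E F : Type*} [NormedAddCommGroup E] [NormedSpace ℝ E] [FiniteDimensional ℝ E]
  [MeasurableSpace E] [BorelSpace E] [NormedAddCommGroup F] [NormedSpace ℝ F] [CompleteSpace F]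
  {ν : Measure E} [ν.IsAddHaarMeasure] {Ω : Set E} {η : E → ℝ} {x y : E} {A M R : ℝ}

theorem HasWeakFDerivOn.norm_sub_le {f : E → F} {f' : E → E →L[ℝ] F}
    (hf : HasWeakFDerivOn f f' Ω ν) (hη : ContDiff ℝ (⊤ : ℕ∞) η) (hM : ∀ y, |η y| ≤ M)
    (hηa : tsupport η ⊆ Metric.closedBall 0 1) (hη1 : ∫ y, η y ∂ν = 1)
    (hx : IsLebesguePoint f ν x) (hy : IsLebesguePoint f ν y)
    (hxR : Metric.closedBall x R ⊆ Ω) (hyR : Metric.closedBall y R ⊆ Ω)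
    (hAx : ∀ r, 0 < r → r < R → ⨍ z in Metric.closedBall x r, ‖f' z‖ ∂ν ≤ A)
    (hAy : ∀ r, 0 < r → r < R → ⨍ z in Metric.closedBall y r, ‖f' z‖ ∂ν ≤ A)
    (hxy : 2 * ‖x - y‖ < R) :
    ‖f x - f y‖ ≤
      2 * (M * 2 ^ (Module.finrank ℝ E + 1) * ν.real (Metric.ball 0 1) * A) * ‖x - y‖ := by
  rcases eq_or_ne x y with rfl | hne
  · simp
  set ρ := ‖x - y‖
  have hρ : 0 < ρ := norm_sub_pos_iff.2 hne
  set I := ∫ z, rescale η x ρ z • f z ∂ν with hI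
  -- The kernel at `x` is a translated kernel at `p`, so one integral `I` is close to both values.
  have hdist : ∀ p, ‖x - p‖ ≤ ρ → IsLebesguePoint f ν p → Metric.closedBall p R ⊆ Ω →
      (∀ r, 0 < r → r < R → ⨍ z in Metric.closedBall p r, ‖f' z‖ ∂ν ≤ A) →
      ‖I - f p‖ ≤
        M * 2 ^ (Module.finrank ℝ E + 1) * ν.real (Metric.ball 0 1) * A * ρ := by
    intro p hp hpf hpR hpA
    have hv : ‖ρ⁻¹ • (x - p)‖ ≤ 1 := by
      rw [norm_smul, norm_inv, Real.norm_of_nonneg hρ.le, inv_mul_le_iff₀ hρ, mul_one]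
      exact hp
    have hsupp : tsupport (fun w => η (w - ρ⁻¹ • (x - p))) ⊆ Metric.closedBall 0 2 := by
      refine closure_minimal (fun w hw => ?_) Metric.isClosed_closedBall
      have hw' := mem_closedBall_zero_iff.1 (hηa (subset_tsupport η hw))
      rw [mem_closedBall_zero_iff]
      linarith [norm_le_norm_sub_add w (ρ⁻¹ • (x - p))]
    rw [hI, ← rescale_comp_sub η p x ρ]
    exact hf.norm_integral_rescale_smul_sub_le (hη.comp (contDiff_id.sub contDiff_const))
      (fun _ => hM _) hsupp two_pos ((integral_sub_right_eq_self η _).trans hη1) hpf hpR hpA hρ hxy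
  linarith [norm_sub_le_norm_sub_add_norm_sub (f x) I (f y), norm_sub_rev (f x) I,
    hdist x (by simpa using hρ.le) hx hxR hAx, hdist y le_rfl hy hyR hAy]

theorem exists_smooth_integral_eq_one (ν : Measure E) [ν.IsAddHaarMeasure] :
    ∃ η : E → ℝ, ContDiff ℝ (⊤ : ℕ∞) η ∧ tsupport η ⊆ Metric.closedBall 0 1 ∧
      ∫ y, η y ∂ν = 1 :=
  let φ : ContDiffBump (0 : E) := ⟨1 / 2, 1, by norm_num, by norm_num⟩
  ⟨φ.normed ν, φ.contDiff_normed, φ.tsupport_normed_eq.subset, φ.integral_normed⟩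

theorem HasWeakFDerivOn.countablyLipschitz {f : E → F} {f' : E → E →L[ℝ] F}
    (hf : HasWeakFDerivOn f f' Ω ν) (hΩ : IsOpen Ω) : CountablyLipschitz f (ν.restrict Ω) := by
  obtain ⟨η, hη, hηa, hη1⟩ := exists_smooth_integral_eq_one ν
  have hηc : HasCompactSupport η :=
    (isCompact_closedBall _ _).of_isClosed_subset (isClosed_tsupport η) hηa
  obtain ⟨M, hM⟩ := hηc.exists_bound_of_continuous hη.continuous
  have hM0 : 0 ≤ M := (norm_nonneg _).trans (hM 0)
  set K : ℕ → NNReal := fun n => Real.toNNReal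
    (2 * (M * 2 ^ (Module.finrank ℝ E + 1) * ν.real (Metric.ball 0 1) * n))
  refine countablyLipschitz_of_forall_dist_lt (K := K) (δ := fun n => 1 / ((n : ℝ) + 1) / 2)
    (A := fun n => {x | Metric.closedBall x (1 / ((n : ℝ) + 1)) ⊆ Ω ∧ IsLebesguePoint f ν x ∧
      ∀ r, 0 < r → r < 1 / ((n : ℝ) + 1) → ⨍ z in Metric.closedBall x r, ‖f' z‖ ∂ν ≤ n})
    (fun n => by positivity) ?_ ?_
  · rintro n x ⟨hxΩ, hx, hxn⟩ y ⟨hyΩ, hy, hyn⟩ hxy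
    rw [dist_eq_norm] at hxy
    rw [dist_eq_norm, dist_eq_norm, Real.coe_toNNReal _ (by positivity)]
    exact hf.norm_sub_le hη hM hηa hη1 hx hy hxΩ hyΩ hxn hyn (by linarith)
  · rw [ae_restrict_iff' hΩ.measurableSet]
    filter_upwards [ae_isLebesguePoint hΩ hf.locallyIntegrableOn,
      ae_isLebesguePoint hΩ hf.locallyIntegrableOn_fderiv] with x hx hx' hxΩ
    obtain ⟨R, hR, hball⟩ := Metric.nhds_basis_closedBall.mem_iff.1 (hΩ.mem_nhds hxΩ)
    obtain ⟨δ, hδ, havg⟩ := mem_nhdsGT_iff_exists_Ioo_subset.1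
      ((hx' hxΩ).eventually_average_norm_le (hΩ.mem_nhds hxΩ) hf.locallyIntegrableOn_fderiv)
    obtain ⟨n, hnR, hnδ, hn⟩ := ((tendsto_one_div_add_atTop_nhds_zero_nat.eventually
      (ge_mem_nhds hR)).and ((tendsto_one_div_add_atTop_nhds_zero_nat.eventually
        (ge_mem_nhds (mem_Ioi.1 hδ))).and (eventually_ge_atTop ⌈1 + ‖f' x‖⌉₊))).exists
    exact ⟨n, (Metric.closedBall_subset_closedBall hnR).trans hball, hx hxΩ, fun r hr hrn =>
      (havg ⟨hr, hrn.trans_le hnδ⟩ : _ ≤ _).trans (Nat.ceil_le.1 hn)⟩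

end Sobolev

theorem MemW11loc.countablyLipschitz {d : ℕ} {Ω : Set (Euc d)} {u : Euc d → Euc d}
    (hu : MemW11loc Ω u) (hΩ : IsOpen Ω) : CountablyLipschitz u (volume.restrict Ω) := by
  obtain ⟨hu, Du, hDu, hDu', hweak⟩ := hu
  refine HasWeakFDerivOn.countablyLipschitz (f' := Du) ⟨hu, fun x hx => ?_, hweak⟩ hΩ
  obtain ⟨s, hs, hint⟩ := hDu' x hx
  refine ⟨s ∩ Ω, inter_mem hs self_mem_nhdsWithin, ?_⟩
  exact (integrable_norm_iff (hDu.mono_measure (Measure.restrict_mono_set _ inter_subset_right))).1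
    (hint.mono_set inter_subset_left)

/-- `p` is a subgradient at `y` of a function `g` on a normed space, `g` being finite everywhere;
`g` need not be convex. -/
def IsSubgradient {F : Type*} [NormedAddCommGroup F] [NormedSpace ℝ F] (g : F → ℝ)
    (p : F →L[ℝ] ℝ) (y : F) : Prop :=
  ∀ w, g y + p (w - y) ≤ g w

section Minorant

variable {E F : Type*} [NormedAddCommGroup E] [NormedSpace ℝ E] [FiniteDimensional ℝ E]
  [MeasurableSpace E] [BorelSpace E] {ν : Measure E} [ν.IsAddHaarMeasure]

theorem differentiableAt_of_concaveOn_of_minorant {G R : E → ℝ} {B : Set E} {x : E}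
    (hG : ConcaveOn ℝ univ G) (hR : DifferentiableWithinAt ℝ R B x) (hRx : R x = G x)
    (hRG : ∀ ε > 0, ∃ s ⊆ B, DensityOne ν s x ∧ ∀ z ∈ s, R z - ε * ‖z - x‖ ≤ G z) :
    DifferentiableAt ℝ G x := by
  refine (hasFDerivAt_of_concaveOn_of_densityOne (ν := ν) (L := fderivWithin ℝ R B x) hG
    fun ε hε => ?_).differentiableAt
  obtain ⟨s, hsB, hs, hsG⟩ := hRG (ε / 2) (half_pos hε)
  have hlin := hasFDerivWithinAt_iff_isLittleO.1 hR.hasFDerivWithinAt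
  refine ⟨s, hs, ?_⟩
  filter_upwards [nhdsWithin_mono x hsB (hlin.bound (half_pos hε)), self_mem_nhdsWithin]
    with z hz hzs
  rw [Real.norm_eq_abs] at hz
  linarith [hsG z hzs, neg_le_of_abs_le hz]

variable [NormedAddCommGroup F] [NormedSpace ℝ F] [FiniteDimensional ℝ F] {K : E → F → ℝ}
  {C : NNReal} {Y : E → F} {p : E → F →L[ℝ] ℝ}

theorem ae_differentiableAt_of_lipschitzOnWith (hK : LipschitzWith C (uncurry K))
    (hconc : ∀ W, ConcaveOn ℝ univ fun z => K z W) {B : Set E}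
    (hsub : ∀ z ∈ B, IsSubgradient (K z) (p z) (Y z)) {CY : NNReal}
    (hY : LipschitzOnWith CY Y B) :
    ∀ᵐ x ∂ν, x ∈ B → DifferentiableAt ℝ (fun w => K w (Y x)) x := by
  have hvalue : LipschitzOnWith _ (fun z => K z (Y z)) B :=
    hK.comp_lipschitzOnWith (LipschitzWith.id.lipschitzOnWith.prodMk hY)
  filter_upwards [hvalue.ae_differentiableWithinAt_of_mem, hY.ae_differentiableWithinAt_of_mem,
    ae_densityOne_inter_preimage ν B p] with x hvaluex hYx hpx hxB
  refine differentiableAt_of_concaveOn_of_minorant (ν := ν)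
    (R := fun z => K z (Y z) + p x (Y x - Y z)) (hconc (Y x))
    ((hvaluex hxB).add ((p x).differentiableAt.comp_differentiableWithinAt x
      ((hYx hxB).const_sub (Y x)))) (by simp) fun ε hε => ?_
  refine ⟨B ∩ p ⁻¹' Metric.ball (p x) (ε / (CY + 1)), inter_subset_left,
    hpx hxB _ (Metric.ball_mem_nhds _ (by positivity)), fun z ⟨hzB, hz⟩ => ?_⟩
  have hpz : ‖p x - p z‖ ≤ ε / (CY + 1) := by
    rw [← dist_eq_norm, dist_comm]
    exact (Metric.mem_ball.1 hz).le
  have hYz : ‖Y x - Y z‖ ≤ (CY + 1) * ‖z - x‖ := by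
    rw [← dist_eq_norm, ← dist_eq_norm, dist_comm z x]
    exact (hY.dist_le_mul x hxB z hzB).trans
      (mul_le_mul_of_nonneg_right (lt_add_one _).le dist_nonneg)
  have herror := (le_abs_self _).trans ((p x - p z).le_of_opNorm_le_of_le hpz hYz)
  rw [← mul_assoc, div_mul_cancel₀ ε (by positivity), _root_.sub_apply] at herror
  linarith [hsub z hzB (Y x)]

theorem ae_differentiableAt_of_lipschitzOnWith_subgradient_of_norm_le
    (hK : LipschitzWith C (uncurry K)) (hconc : ∀ W, ConcaveOn ℝ univ fun z => K z W) {B : Set E}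
    (hsub : ∀ z ∈ B, IsSubgradient (K z) (p z) (Y z)) {Cp M : NNReal}
    (hp : LipschitzOnWith Cp p B) (hM : ∀ z ∈ B, ‖Y z‖ ≤ M) :
    ∀ᵐ x ∂ν, x ∈ B → DifferentiableAt ℝ (fun w => K w (Y x)) x := by
  have hminorant : ∀ z ∈ B, ∀ W, p z W - (p z (Y z) - K z (Y z)) ≤ K z W := by
    intro z hz W
    have h := hsub z hz W
    rw [map_sub] at h
    linarith
  have hconj : LipschitzOnWith (Cp * M + C) (fun z => p z (Y z) - K z (Y z)) B := by
    refine LipschitzOnWith.of_le_add_mul _ fun x hx z hz => ?_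
    have hKxz := (le_abs_self _).trans (hK.dist_le_mul (z, Y x) (x, Y x))
    rw [dist_prod_same_right, dist_comm z x] at hKxz
    have hpxz := (le_abs_self _).trans ((p x - p z).le_of_opNorm_le_of_le
      ((dist_eq_norm (p x) (p z)).symm.trans_le (hp.dist_le_mul x hx z hz)) (hM x hx))
    rw [_root_.sub_apply] at hpxz
    simp only [uncurry_apply_pair] at hKxz
    push_cast
    linarith [hminorant z hz (Y x)]
  filter_upwards [hconj.ae_differentiableWithinAt_of_mem, hp.ae_differentiableWithinAt_of_mem,
    ae_densityOne ν B] with x hconjx hpx hdens hxB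
  refine differentiableAt_of_concaveOn_of_minorant (ν := ν)
    (R := fun z => p z (Y x) - (p z (Y z) - K z (Y z))) (hconc (Y x))
    (((hpx hxB).clm_apply (differentiableWithinAt_const _)).sub (hconjx hxB)) (by simp)
    fun ε hε => ⟨B, subset_rfl, hdens hxB, fun z hz => ?_⟩
  have hpos : 0 ≤ ε * ‖z - x‖ := by positivity
  linarith [hminorant z hz (Y x)]

theorem ae_differentiableAt_of_lipschitzOnWith_subgradient (hK : LipschitzWith C (uncurry K))
    (hconc : ∀ W, ConcaveOn ℝ univ fun z => K z W) {B : Set E}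
    (hsub : ∀ z ∈ B, IsSubgradient (K z) (p z) (Y z)) {Cp : NNReal}
    (hp : LipschitzOnWith Cp p B) :
    ∀ᵐ x ∂ν, x ∈ B → DifferentiableAt ℝ (fun w => K w (Y x)) x := by
  have hbounded : ∀ᵐ x ∂ν, ∀ n : ℕ, x ∈ B ∩ {z | ‖Y z‖ ≤ n} →
      DifferentiableAt ℝ (fun w => K w (Y x)) x := ae_all_iff.2 fun n =>
    ae_differentiableAt_of_lipschitzOnWith_subgradient_of_norm_le (M := n) hK hconc
      (fun z hz => hsub z hz.1) (hp.mono inter_subset_left) fun z hz => hz.2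
  filter_upwards [hbounded] with x hx hxB
  exact hx _ ⟨hxB, Nat.le_ceil ‖Y x‖⟩

theorem ae_differentiableAt_of_countablyLipschitz {μ : Measure E} (hμν : μ ≪ ν)
    (hK : LipschitzWith C (uncurry K)) (hconc : ∀ W, ConcaveOn ℝ univ fun z => K z W)
    (hsub : ∀ᵐ z ∂μ, IsSubgradient (K z) (p z) (Y z))
    (hYp : CountablyLipschitz Y μ ∨ CountablyLipschitz p μ) :
    ∀ᵐ x ∂μ, DifferentiableAt ℝ (fun w => K w (Y x)) x := by
  set B := {z | IsSubgradient (K z) (p z) (Y z)}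
  have hcover : ∀ᵐ x ∂μ, x ∈ B → DifferentiableAt ℝ (fun w => K w (Y x)) x := by
    rcases hYp with hY | hp
    · refine hY.ae_of_forall fun CY A hA => ?_
      filter_upwards [hμν.ae_le (ae_differentiableAt_of_lipschitzOnWith (B := A ∩ B) hK hconc
        (fun z hz => hz.2) (hA.mono inter_subset_left))] with x hx hxA hxB
      exact hx ⟨hxA, hxB⟩
    · refine hp.ae_of_forall fun Cp A hA => ?_
      filter_upwards [hμν.ae_le (ae_differentiableAt_of_lipschitzOnWith_subgradient (B := A ∩ B)
        hK hconc (fun z hz => hz.2) (hA.mono inter_subset_left))] with x hx hxA hxB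
      exact hx ⟨hxA, hxB⟩
  filter_upwards [hcover, hsub] with x hx hxB
  exact hx hxB

end Minorant

section Touching

variable {E ι : Type*} [NormedAddCommGroup E] [NormedSpace ℝ E] {w₀ : E}

theorem differentiableAt_of_le_of_le {f l u : E → ℝ} (hl : DifferentiableAt ℝ l w₀)
    (hu : DifferentiableAt ℝ u w₀) (hlf : ∀ᶠ w in 𝓝 w₀, l w ≤ f w)
    (hfu : ∀ᶠ w in 𝓝 w₀, f w ≤ u w) (hl₀ : l w₀ = f w₀) (hu₀ : u w₀ = f w₀) :
    DifferentiableAt ℝ f w₀ := by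
  have hgap : HasFDerivAt (u - l) (0 : E →L[ℝ] ℝ) w₀ := by
    have hmin : IsLocalMin (u - l) w₀ := by
      filter_upwards [hlf, hfu] with w hlw huw
      simp only [Pi.sub_apply, hl₀, hu₀]
      linarith
    exact hmin.fderiv_eq_zero ▸ (hu.sub hl).hasFDerivAt
  have hexcess : HasFDerivAt (f - l) (0 : E →L[ℝ] ℝ) w₀ := by
    rw [hasFDerivAt_iff_isLittleO] at hgap ⊢
    refine (Asymptotics.IsBigO.of_bound 1 ?_).trans_isLittleO hgap
    filter_upwards [hlf, hfu] with w hlw huw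
    simp only [Pi.sub_apply, hl₀, hu₀, sub_self, sub_zero, zero_apply, one_mul, Real.norm_eq_abs]
    exact abs_le_abs_of_nonneg (sub_nonneg.2 hlw) (sub_le_sub_right huw _)
  simpa using hexcess.differentiableAt.add hl

/-- `h` has a minorant near `w₀` which is differentiable at `w₀` and agrees with `h` there, i.e. `h`
has a nonempty Fréchet subdifferential at `w₀`. -/
def HasDifferentiableMinorantAt (h : E → ℝ) (w₀ : E) : Prop :=
  ∃ l : E → ℝ, DifferentiableAt ℝ l w₀ ∧ l w₀ = h w₀ ∧ ∀ᶠ w in 𝓝 w₀, l w ≤ h w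

theorem differentiableAt_of_isLocalMax_sum {s : Finset ι} {h : ι → E → ℝ}
    (hh : ∀ k ∈ s, HasDifferentiableMinorantAt (h k) w₀)
    (hmax : IsLocalMax (fun w => ∑ k ∈ s, h k w) w₀) {k : ι} (hk : k ∈ s) :
    DifferentiableAt ℝ (h k) w₀ := by
  classical
  choose! l hl hl₀ hlh using hh
  have hrest : ∀ j ∈ s.erase k, j ∈ s := fun _ => Finset.mem_of_mem_erase
  refine differentiableAt_of_le_of_le (hl k hk)
    (u := fun w => ∑ j ∈ s, h j w₀ - ∑ j ∈ s.erase k, l j w)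
    ((DifferentiableAt.fun_sum fun j hj => hl j (hrest j hj)).const_sub _) (hlh k hk) ?_
    (hl₀ k hk) ?_
  · filter_upwards [hmax, (s.eventually_all).2 hlh] with w hw hlw
    have hle := Finset.sum_le_sum fun j hj => hlw j (hrest j hj)
    rw [← Finset.add_sum_erase s (fun j => h j w) hk] at hw
    linarith
  · rw [← Finset.add_sum_erase s _ hk, Finset.sum_congr rfl fun j hj => hl₀ j (hrest j hj),
      add_sub_cancel_right]

end Touching

section CyclicShift

theorem cyc_iterate_apply {n : ℕ} {α : Type*} (x : Fin n → α) (k : ℕ) (i : Fin n) :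
    cyc^[k] x i = x ⟨(i.1 + k) % n, Nat.mod_lt _ i.pos⟩ := by
  induction k generalizing i with
  | zero => simp [Nat.mod_eq_of_lt i.2]
  | succ k ih =>
    rw [iterate_succ_apply', cyc, ih]
    simp only [Nat.mod_add_mod, add_assoc, add_comm 1]

theorem cyc_iterate_val {n : ℕ} {α : Type*} (x : Fin n → α) (k : Fin n) :
    cyc^[k.1] x = fun i => x (i + k) :=
  funext (cyc_iterate_apply x k)

theorem cyc_iterate_val_update {N : ℕ} {α : Type*} (x : Fin (N + 1) → α) (k i : Fin (N + 1))
    (w : α) : cyc^[k.1] (update x i w) = update (cyc^[k.1] x) (i - k) w := by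
  simp only [cyc_iterate_val, sub_eq_add_neg]
  exact update_comp_equiv x (Equiv.addRight k) i w

variable {E : Type*} [NormedAddCommGroup E] [NormedSpace ℝ E] {N : ℕ}
  {H : (Fin (N + 1) → E) → ℝ} {X : Fin (N + 1) → E}

theorem IsSubgradient.hasDifferentiableMinorantAt_update {p : (Fin N → E) →L[ℝ] ℝ}
    (hp : IsSubgradient (fun Y => H (Fin.cons (X 0) Y)) p (Fin.tail X))
    (hfirst : DifferentiableAt ℝ (fun w => H (Fin.cons w (Fin.tail X))) (X 0))
    (i : Fin (N + 1)) : HasDifferentiableMinorantAt (fun w => H (update X i w)) (X i) := by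
  induction i using Fin.cases with
  | zero =>
    have hupdate : ∀ w, update X 0 w = Fin.cons w (Fin.tail X) := fun w => by
      rw [← Fin.update_cons_zero (X 0), Fin.cons_self_tail]
    simp only [hupdate]
    exact ⟨_, hfirst, rfl, Eventually.of_forall fun _ => le_rfl⟩
  | succ l =>
    have hupdate : ∀ w, update X l.succ w = Fin.cons (X 0) (update (Fin.tail X) l w) := fun w => by
      rw [Fin.cons_update, Fin.cons_self_tail]
    refine ⟨fun w => H X + p (update (Fin.tail X) l w - Fin.tail X), ?_, ?_,
      Eventually.of_forall fun w => ?_⟩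
    · exact (p.differentiableAt.comp _
        ((hasFDerivAt_update _ _).differentiableAt.sub_const _)).const_add _
    · have hself : update (Fin.tail X) l (X l.succ) = Fin.tail X := update_eq_self l _
      simp [hself]
    · simpa only [hupdate, Fin.cons_self_tail] using hp (update (Fin.tail X) l w)

theorem differentiableAt_update_of_cyclic_sum_eq_zero {Ω : Set E} (hΩ : IsOpen Ω)
    (hH : ∀ Z : Fin (N + 1) → E, (∀ i, Z i ∈ Ω) → ∑ k : Fin (N + 1), H (cyc^[k.1] Z) ≤ 0)
    (hXΩ : ∀ i, X i ∈ Ω) (hX : ∑ k : Fin (N + 1), H (cyc^[k.1] X) = 0)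
    (hminorant : ∀ k i : Fin (N + 1), HasDifferentiableMinorantAt
      (fun w => H (update (cyc^[k.1] X) i w)) (cyc^[k.1] X i)) (i : Fin (N + 1)) :
    DifferentiableAt ℝ (fun w => H (update X i w)) (X i) := by
  have hmax : IsLocalMax (fun w => ∑ k : Fin (N + 1), H (cyc^[k.1] (update X i w))) (X i) := by
    filter_upwards [hΩ.mem_nhds (hXΩ i)] with w hw
    rw [update_eq_self, hX]
    exact hH _ (forall_update_iff X (fun _ z => z ∈ Ω) |>.2 ⟨hw, fun j _ => hXΩ j⟩)
  refine differentiableAt_of_isLocalMax_sum (fun k _ => ?_) hmax (Finset.mem_univ 0)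
  have hk := hminorant k (i - k)
  simp only [← cyc_iterate_val_update] at hk
  simpa only [cyc_iterate_val, sub_add_cancel] using hk

end CyclicShift

/-- The orbit segment `(x, Sx, …, S^N x)`. -/
def orbit {α : Type*} (N : ℕ) (S : α → α) (x : α) : Fin (N + 1) → α := fun i => S^[i.1] x

theorem cyc_iterate_orbit {α : Type*} {N : ℕ} {S : α → α} {x : α} (hx : IsPeriodicPt S (N + 1) x)
    (k : ℕ) : cyc^[k] (orbit N S x) = orbit N S (S^[k] x) := by
  ext1 i
  rw [cyc_iterate_apply, orbit, orbit, hx.iterate_mod_apply, iterate_add_apply]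

theorem sum_cyc_iterate_orbit {α M : Type*} [AddCommMonoid M] {N : ℕ} {S : α → α} {x : α}
    (hx : IsPeriodicPt S (N + 1) x) (H : (Fin (N + 1) → α) → M) :
    ∑ k : Fin (N + 1), H (cyc^[k.1] (orbit N S x)) =
      birkhoffSum S (fun y => H (orbit N S y)) (N + 1) x := by
  simp only [cyc_iterate_orbit hx, birkhoffSum]
  exact Fin.sum_univ_eq_sum_range (fun k => H (orbit N S (S^[k] x))) (N + 1)

section MeasurePreserving

variable {α : Type*} [MeasurableSpace α] {μ : Measure α} {T : α → α} {g : α → ℝ}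

theorem ae_forall_iterate {P : α → Prop} (hT : Measure.QuasiMeasurePreserving T μ μ)
    (hP : ∀ᵐ x ∂μ, P x) : ∀ᵐ x ∂μ, ∀ k : ℕ, P (T^[k] x) :=
  ae_all_iff.2 fun k => (hT.iterate k).ae hP

theorem integrable_birkhoffSum (hT : MeasurePreserving T μ μ) (hg : Integrable g μ) (n : ℕ) :
    Integrable (birkhoffSum T g n) μ :=
  integrable_finsetSum _ fun k _ => (hT.iterate k).integrable_comp_of_integrable hg

theorem integral_birkhoffSum (hT : MeasurePreserving T μ μ) (hg : Integrable g μ) (n : ℕ) :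
    ∫ x, birkhoffSum T g n x ∂μ = n * ∫ x, g x ∂μ := by
  have hiterate : ∀ k, ∫ x, g (T^[k] x) ∂μ = ∫ x, g x ∂μ := fun k => by
    have hmap := (hT.iterate k).map_eq
    rw [← integral_map (hT.measurable.iterate k).aemeasurable
      (hmap.symm ▸ hg.aestronglyMeasurable), hmap]
  exact (integral_finsetSum _ fun k _ => (hT.iterate k).integrable_comp_of_integrable hg).trans
    (by simp [hiterate])

theorem ae_birkhoffSum_eq_zero_of_nonpos (hT : MeasurePreserving T μ μ) (hg : Integrable g μ)
    (hg₀ : ∫ x, g x ∂μ = 0) {n : ℕ} (hn : ∀ᵐ x ∂μ, birkhoffSum T g n x ≤ 0) :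
    ∀ᵐ x ∂μ, birkhoffSum T g n x = 0 := by
  have hzero : ∫ x, -birkhoffSum T g n x ∂μ = 0 := by
    rw [integral_neg, integral_birkhoffSum hT hg, hg₀, mul_zero, neg_zero]
  have hneg := (integral_eq_zero_iff_of_nonneg_ae
    (hn.mono fun x hx => neg_nonneg.2 hx) (integrable_birkhoffSum hT hg n).neg).1 hzero
  exact hneg.mono fun x hx => neg_eq_zero.1 hx

end MeasurePreserving

section Orbit

variable {E : Type*} [NormedAddCommGroup E] [MeasurableSpace E] {μ : Measure E} {N : ℕ} {S : E → E}

theorem integrable_comp_orbit [ProperSpace E] [OpensMeasurableSpace E] [IsFiniteMeasure μ]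
    {Ω : Set E} (hΩ : Bornology.IsBounded Ω) (hμΩ : ∀ᵐ x ∂μ, x ∈ Ω)
    (hS : Measure.QuasiMeasurePreserving S μ μ) {H : (Fin (N + 1) → E) → ℝ} (hH : Continuous H) :
    Integrable (fun x => H (orbit N S x)) μ := by
  obtain ⟨M, hM⟩ := (isCompact_univ_pi fun _ : Fin (N + 1) =>
    hΩ.isCompact_closure).exists_bound_of_continuousOn hH.continuousOn
  have horbit : Measurable (orbit N S) := measurable_pi_lambda _ fun i => hS.measurable.iterate i
  refine .of_bound (hH.measurable.comp horbit).aestronglyMeasurable M ?_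
  filter_upwards [ae_forall_iterate hS hμΩ] with x hx
  exact hM _ fun i _ => subset_closure (hx i)

theorem CountablyLipschitz.tail_orbit (hS : CountablyLipschitz S μ)
    (hSμ : Measure.QuasiMeasurePreserving S μ μ) :
    CountablyLipschitz (fun x => Fin.tail (orbit N S x)) μ :=
  .pi fun l : Fin N => hS.iterate hSμ l.succ

end Orbit

theorem lipschitzWith_cons {α : Type*} [PseudoEMetricSpace α] {N : ℕ} :
    LipschitzWith 1 (uncurry fun (z : α) (Y : Fin N → α) => (Fin.cons z Y : Fin (N + 1) → α)) := by
  refine LipschitzWith.of_edist_le fun a b => edist_pi_le_iff.2 fun i => ?_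
  induction i using Fin.cases with
  | zero => exact le_max_left _ _
  | succ l => exact (edist_le_pi_edist a.2 b.2 l).trans (le_max_right _ _)

theorem ae_differentiability_along_orbit_general {E : Type*} [NormedAddCommGroup E]
    [NormedSpace ℝ E] [FiniteDimensional ℝ E] [MeasurableSpace E] [BorelSpace E] {μ ν : Measure E}
    [ν.IsAddHaarMeasure] (hμν : μ ≪ ν) {Ω : Set E} (hΩ : IsOpen Ω) (hμΩ : ∀ᵐ x ∂μ, x ∈ Ω)
    {N : ℕ} {S : E → E} (hS : MeasurePreserving S μ μ) (hSper : ∀ᵐ x ∂μ, S^[N + 1] x = x)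
    {H : (Fin (N + 1) → E) → ℝ} {C : NNReal} (hH : LipschitzWith C H)
    (hconc : ∀ Y : Fin N → E, ConcaveOn ℝ univ fun z => H (Fin.cons z Y))
    (hcyc : ∀ X : Fin (N + 1) → E, (∀ i, X i ∈ Ω) → ∑ k : Fin (N + 1), H (cyc^[k.1] X) ≤ 0)
    (hint : Integrable (fun x => H (orbit N S x)) μ) (hint₀ : ∫ x, H (orbit N S x) ∂μ = 0)
    {p : E → (Fin N → E) →L[ℝ] ℝ}
    (hsub : ∀ᵐ x ∂μ, IsSubgradient (fun Y => H (Fin.cons x Y)) (p x) (Fin.tail (orbit N S x)))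
    (hreg : CountablyLipschitz S μ ∨ CountablyLipschitz p μ) :
    ∀ᵐ x ∂μ, ∀ i : Fin (N + 1),
      DifferentiableAt ℝ (fun w => H (update (orbit N S x) i w)) (S^[i.1] x) := by
  have hS' := hS.quasiMeasurePreserving
  have hΩorbit := ae_forall_iterate hS' hμΩ
  have hfirst : ∀ᵐ x ∂μ, DifferentiableAt ℝ (fun w => H (Fin.cons w (Fin.tail (orbit N S x)))) x :=
    ae_differentiableAt_of_countablyLipschitz hμν (hH.comp lipschitzWith_cons) hconc hsub
      (hreg.imp_left fun h => h.tail_orbit hS')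
  have hcyc₀ : ∀ᵐ x ∂μ, birkhoffSum S (fun y => H (orbit N S y)) (N + 1) x = 0 := by
    refine ae_birkhoffSum_eq_zero_of_nonpos hS hint hint₀ ?_
    filter_upwards [hΩorbit, hSper] with x hxΩ hxper
    exact sum_cyc_iterate_orbit hxper H ▸ hcyc _ fun i => hxΩ i
  filter_upwards [hΩorbit, hSper, hcyc₀, ae_forall_iterate hS' (hsub.and hfirst)]
    with x hxΩ hxper hx₀ hx
  refine differentiableAt_update_of_cyclic_sum_eq_zero hΩ hcyc (fun i => hxΩ i)
    ((sum_cyc_iterate_orbit hxper H).trans hx₀) fun k => ?_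
  rw [cyc_iterate_orbit hxper]
  exact (hx k).1.hasDifferentiableMinorantAt_update (hx k).2

/-- The continuous bilinear pairing `(v, w) ↦ ∑ i, ⟪v i, w i⟫`, through which the vector fields
`u₁, …, u_{N-1}` are read as a continuous linear functional on `(ℝ^d)^{N-1}`; the product carries
the sup norm. -/
def piInnerSL (ι E : Type*) [Fintype ι] [NormedAddCommGroup E] [InnerProductSpace ℝ E] :
    (ι → E) →L[ℝ] (ι → E) →L[ℝ] ℝ :=
  ∑ i, (innerSL ℝ).bilinearComp (.proj i) (.proj i)

theorem piInnerSL_apply {ι E : Type*} [Fintype ι] [NormedAddCommGroup E] [InnerProductSpace ℝ E]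
    (v w : ι → E) : piInnerSL ι E v w = ∑ i, ⟪v i, w i⟫ := by
  simp [piInnerSL]

theorem ae_differentiability_along_orbit {d N : ℕ} (hN : 1 ≤ N) (Ω : Set (Euc d))
    (hΩo : IsOpen Ω) (hΩn : Ω.Nonempty) (hΩb : Bornology.IsBounded Ω)
    (hΩconn : IsConnected Ω)
    (μ : Measure (Euc d)) [IsProbabilityMeasure μ] (hμΩ : μ Ωᶜ = 0)
    (hac : μ ≪ volume)
    (S : Euc d → Euc d) (hSmeas : Measurable S)
    (hSΩ : ∀ x ∈ closure Ω, S x ∈ closure Ω)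
    (hSpres : μ.map S = μ) (hSinv : ∀ᵐ x ∂μ, S^[N + 1] x = x)
    (H : (Fin (N + 1) → Euc d) → ℝ)
    (hHLip : ∃ C : NNReal, LipschitzWith C H)
    (hHccv : ConcaveFirst H) (hHcvx : ConvexTail H)
    (hHsub : SubAnti (closure Ω) H)
    (hint : ∫ x, H (fun i : Fin (N + 1) => S^[i.1] x) ∂μ = 0)
    (u : Fin N → Euc d → Euc d)
    (hsubdiff : ∀ᵐ x ∂μ, ∀ Y : Fin N → Euc d,
      H (Fin.cons x Y) ≥ H (Fin.cons x fun l : Fin N => S^[l.1 + 1] x) +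
        ∑ l : Fin N, ⟪u l x, Y l - S^[l.1 + 1] x⟫)
    (hreg : MemW11loc Ω S ∨ ∀ l, MemW11loc Ω (u l)) :
    ∃ Ω₀ : Set (Euc d), Ω₀ ⊆ Ω ∧ μ (Ω \ Ω₀) = 0 ∧
      ∀ x ∈ Ω₀, ∀ i : Fin (N + 1),
        DifferentiableAt ℝ
          (fun w : Euc d => H (Function.update (fun j : Fin (N + 1) => S^[j.1] x) i w))
          (S^[i.1] x) := by
  obtain ⟨C, hH⟩ := hHLip
  have hmem : ∀ᵐ x ∂μ, x ∈ Ω := hμΩ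
  have hS : MeasurePreserving S μ μ := ⟨hSmeas, hSpres⟩
  have hacΩ : μ ≪ volume.restrict Ω :=
    Measure.restrict_eq_self_of_ae_mem hmem ▸ hac.restrict Ω
  have hdiff := ae_differentiability_along_orbit_general
    (p := fun x => piInnerSL (Fin N) (Euc d) fun l => u l x) hac hΩo hmem hS hSinv hH hHccv
    (fun X hX => hHsub.1 X fun i => subset_closure (hX i))
    (integrable_comp_orbit hΩb hmem hS.quasiMeasurePreserving hH.continuous) hint
    (hsubdiff.mono fun x hx Y => by rw [piInnerSL_apply]; exact hx Y)
    (hreg.imp (fun h => (h.countablyLipschitz hΩo).mono_ac hacΩ) fun h =>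
      .lipschitz_comp (piInnerSL (Fin N) (Euc d)).lipschitz
        (.pi fun l => ((h l).countablyLipschitz hΩo).mono_ac hacΩ))
  exact ⟨Ω ∩ _, inter_subset_left,
    measure_mono_null (fun x hx h => hx.2 ⟨hx.1, h⟩) (ae_iff.1 hdiff), fun x hx => hx.2⟩
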